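/- arXiv:2204.09390 — 3 statements merged into one kernel-verified Lean document; each statement's English description precedes it below -/
import Mathlib

section
/- Let X be a locally compact Hausdorff topological space and h : X → [0,∞) a function. The following are equivalent: (i) for every t > 0 and every φ ∈ C₀(X), the function x ↦ e^{-t h(x)} φ(x) belongs to C₀(X); (ii) for every t > 0 and every bounded continuous φ : X → ℝ, the function x ↦ e^{-t h(x)} φ(x) is bounded and continuous; (iii) h is continuous. -/
open Filter Set Topology

/-!
Multiplying by `e^{-th}` is multiplying by a bounded function, so if `h` is continuous both function
spaces are preserved. Conversely, `e^{-h}` is continuous at a point as soon as its product with one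
continuous function not vanishing there is: in the bounded case the constant `1` serves at all
points, and in `C₀(X)` Urysohn's lemma supplies a compactly supported function for each point.
-/

theorem continuous_of_forall_continuous_mul_of_hasCompactSupport
    {X : Type*} [TopologicalSpace X] [WeaklyLocallyCompactSpace X] [R1Space X] {m : X → ℝ}
    (H : ∀ φ : X → ℝ, Continuous φ → HasCompactSupport φ → Continuous (fun x => m x * φ x)) :
    Continuous m := by
  refine continuous_iff_continuousAt.2 fun x => ?_
  obtain ⟨φ, hφ_supp, -, hφx⟩ := exists_continuous_nonneg_pos x
  exact (tendsto_mul_iff_of_ne_zero φ.continuous.continuousAt hφx).1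
    (H φ φ.continuous hφ_supp).continuousAt

section ExpMultiplier

variable {X : Type*} {h : X → ℝ} {t : ℝ}

theorem continuous_exp_neg_mul_iff [TopologicalSpace X] (ht : t ≠ 0) :
    Continuous (fun x => Real.exp (-(t * h x))) ↔ Continuous h :=
  calc Continuous (Real.exp ∘ fun x => -(t * h x))
      ↔ Continuous fun x => -(t * h x) := Real.isOpenEmbedding_exp.isInducing.continuous_iff.symm
    _ ↔ Continuous fun x => t * h x := continuous_neg_iff
    _ ↔ Continuous h := continuous_const_smul_iff₀ ht

theorem exists_forall_abs_exp_neg_mul_le (hh : BddBelow (range h)) (ht : 0 ≤ t) :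
    ∃ C : ℝ, ∀ x, |Real.exp (-(t * h x))| ≤ C := by
  obtain ⟨c, hc⟩ := hh
  refine ⟨Real.exp (-(t * c)), fun x => ?_⟩
  rw [Real.abs_exp]
  gcongr
  exact hc (mem_range_self x)

end ExpMultiplier

theorem statement_7_general
    {X : Type*} [TopologicalSpace X] [WeaklyLocallyCompactSpace X] [R1Space X]
    (h : X → ℝ) (hbdd : BddBelow (range h)) :
    List.TFAE [
      ∀ t : ℝ, 0 < t → ∀ φ : X → ℝ, Continuous φ → Tendsto φ (cocompact X) (𝓝 0) →
        Continuous (fun x => Real.exp (-(t * h x)) * φ x) ∧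
        Tendsto (fun x => Real.exp (-(t * h x)) * φ x) (cocompact X) (𝓝 0),
      ∀ t : ℝ, 0 < t → ∀ φ : X → ℝ, Continuous φ → (∃ C : ℝ, ∀ x, |φ x| ≤ C) →
        Continuous (fun x => Real.exp (-(t * h x)) * φ x) ∧
        ∃ C : ℝ, ∀ x, |Real.exp (-(t * h x)) * φ x| ≤ C,
      Continuous h ] := by
  tfae_have 1 → 3 := fun H =>
    (continuous_exp_neg_mul_iff one_ne_zero).1 <|
      continuous_of_forall_continuous_mul_of_hasCompactSupport fun φ hφ hφ_supp =>
        (H 1 one_pos φ hφ hφ_supp.is_zero_at_infty).1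
  tfae_have 2 → 3 := fun H =>
    (continuous_exp_neg_mul_iff one_ne_zero).1 <| by
      simpa only [Pi.one_apply, mul_one] using
        (H 1 one_pos 1 continuous_one ⟨1, fun _ => abs_one.le⟩).1
  tfae_have 3 → 1 := fun hh t ht φ hφ hφ_zero => by
    obtain ⟨C, hC⟩ := exists_forall_abs_exp_neg_mul_le hbdd ht.le
    exact ⟨by fun_prop, isBoundedUnder_le_mul_tendsto_zero (isBoundedUnder_of ⟨C, hC⟩) hφ_zero⟩
  tfae_have 3 → 2 := fun hh t ht φ hφ ⟨B, hB⟩ => by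
    obtain ⟨C, hC⟩ := exists_forall_abs_exp_neg_mul_le hbdd ht.le
    refine ⟨by fun_prop, C * B, fun x => ?_⟩
    rw [abs_mul]
    exact mul_le_mul (hC x) (hB x) (abs_nonneg _) ((abs_nonneg _).trans (hC x))
  tfae_finish

/-- For a locally compact Hausdorff space `X` and `h : X → [0,∞)`, the
following are equivalent: (i) the multiplication semigroup `T_t φ = e^{-th} φ` preserves
`C₀(X)` for all `t > 0`; (ii) it preserves bounded continuous functions for all `t > 0`;
(iii) `h` is continuous. -/
theorem statement_7
    {X : Type*} [TopologicalSpace X] [LocallyCompactSpace X] [T2Space X]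
    (h : X → ℝ) (hnonneg : ∀ x, 0 ≤ h x) :
    List.TFAE [
      ∀ t : ℝ, 0 < t → ∀ φ : X → ℝ, Continuous φ → Tendsto φ (cocompact X) (𝓝 0) →
        Continuous (fun x => Real.exp (-(t * h x)) * φ x) ∧
        Tendsto (fun x => Real.exp (-(t * h x)) * φ x) (cocompact X) (𝓝 0),
      ∀ t : ℝ, 0 < t → ∀ φ : X → ℝ, Continuous φ → (∃ C : ℝ, ∀ x, |φ x| ≤ C) →
        Continuous (fun x => Real.exp (-(t * h x)) * φ x) ∧
        ∃ C : ℝ, ∀ x, |Real.exp (-(t * h x)) * φ x| ≤ C,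
      Continuous h ] :=
  statement_7_general h ⟨0, forall_mem_range.2 hnonneg⟩
end

section
/- Let (X,d) be a metric space and m a Borel measure on X such that 0 < m(B(x,r)) < ∞ for every open ball B(x,r). Suppose there are constants C > 0 and N > 0 such that m(B(x,R)) ≤ C e^{CR} (R/r)^N m(B(x,r)) for all x ∈ X and all 0 < r ≤ R (local volume doubling). Then for every ε > 0 there exists a constant C' > 0 such that for all t > 0 and all x₁, x₂ ∈ X one has m(B(x₂,√t)) ≤ C' e^{C' t} e^{ε d(x₁,x₂)²/t} m(B(x₁,√t)). -/
open MeasureTheory Filter Set Metric Topology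

/-!
The ball `B(x₂, √t)` lies in `B(x₁, √t + d)` with `d = d(x₁, x₂)`, so doubling at `x₁` bounds its
measure by `C e^{C(√t + d)} (1 + d/√t)^N m(B(x₁, √t))`. Since `(1 + u)^N ≤ e^{N u}`, the factor is
controlled by an exponential whose exponent is `C √t + C d + N d/√t`. Young's inequality splits off
`ε d²/(2t)` from each of the last two terms, leaving multiples of `t` and constants.
-/

lemma mul_le_sq_div_add_half_mul_sq {F : Type*} [Field F] [LinearOrder F] [IsStrictOrderedRing F]
    {ε : F} (hε : 0 < ε) (a b : F) :
    a * b ≤ a ^ 2 / (2 * ε) + ε * b ^ 2 / 2 := by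
  have hyoung : 2 * b * a ≤ ε * b ^ 2 + ε⁻¹ * a ^ 2 := two_mul_le_add_mul_sq hε
  have hhalf : a ^ 2 / (2 * ε) = ε⁻¹ * a ^ 2 / 2 := by field_simp
  linarith

section DoublingFactor

variable {C N ε r d : ℝ}

lemma one_add_rpow_le_exp_mul {u : ℝ} (hu : -1 ≤ u) (hN : 0 ≤ N) :
    (1 + u) ^ N ≤ Real.exp (N * u) := by
  rw [mul_comm, Real.exp_mul]
  have hbase : 1 + u ≤ Real.exp u := by linarith [Real.add_one_le_exp u]
  exact Real.rpow_le_rpow (by linarith) hbase hN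

lemma doubling_exponent_le (hC : 0 ≤ C) (hε : 0 < ε) (hr : 0 < r) :
    C * (r + d) + N * (d / r) ≤
      (C + N ^ 2 / (2 * ε)) + (C + C ^ 2 / (2 * ε)) * r ^ 2 + ε * (d / r) ^ 2 := by
  have hconst : C * r ≤ C * (1 + r ^ 2) :=
    mul_le_mul_of_nonneg_left (by nlinarith [sq_nonneg (r - 1)]) hC
  have hlinear : C * d ≤ (C * r) ^ 2 / (2 * ε) + ε * (d / r) ^ 2 / 2 :=
    calc C * d = C * r * (d / r) := by field_simp
      _ ≤ _ := mul_le_sq_div_add_half_mul_sq hε _ _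
  have hpower : N * (d / r) ≤ N ^ 2 / (2 * ε) + ε * (d / r) ^ 2 / 2 :=
    mul_le_sq_div_add_half_mul_sq hε _ _
  have hsq : (C * r) ^ 2 / (2 * ε) = C ^ 2 / (2 * ε) * r ^ 2 := by ring
  linarith

lemma doubling_factor_le (hC : 0 ≤ C) (hN : 0 ≤ N) (hε : 0 < ε) (hr : 0 < r) (hd : 0 ≤ d) :
    C * Real.exp (C * (r + d)) * ((r + d) / r) ^ N ≤
      C * Real.exp (C + N ^ 2 / (2 * ε)) * Real.exp ((C + C ^ 2 / (2 * ε)) * r ^ 2) *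
        Real.exp (ε * (d / r) ^ 2) := by
  have hu : -1 ≤ d / r := by linarith [div_nonneg hd hr.le]
  calc C * Real.exp (C * (r + d)) * ((r + d) / r) ^ N
      = C * Real.exp (C * (r + d)) * (1 + d / r) ^ N := by rw [add_div, div_self hr.ne']
    _ ≤ C * Real.exp (C * (r + d)) * Real.exp (N * (d / r)) := by
        gcongr
        exact one_add_rpow_le_exp_mul hu hN
    _ = C * Real.exp (C * (r + d) + N * (d / r)) := by rw [Real.exp_add, mul_assoc]
    _ ≤ C * Real.exp ((C + N ^ 2 / (2 * ε)) + (C + C ^ 2 / (2 * ε)) * r ^ 2 +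
          ε * (d / r) ^ 2) := by
        gcongr C * Real.exp ?_
        exact doubling_exponent_le hC hε hr
    _ = _ := by simp only [Real.exp_add, mul_assoc]

lemma exists_doubling_factor_le (hC : 0 < C) (hN : 0 ≤ N) (hε : 0 < ε) :
    ∃ C' : ℝ, 0 < C' ∧ ∀ r d : ℝ, 0 < r → 0 ≤ d →
      C * Real.exp (C * (r + d)) * ((r + d) / r) ^ N ≤
        C' * Real.exp (C' * r ^ 2) * Real.exp (ε * (d / r) ^ 2) := by
  let A := C * Real.exp (C + N ^ 2 / (2 * ε))
  let B := C + C ^ 2 / (2 * ε)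
  have hA : 0 < A := by positivity
  refine ⟨max A B, lt_max_of_lt_left hA, fun r d hr hd => ?_⟩
  calc C * Real.exp (C * (r + d)) * ((r + d) / r) ^ N
      ≤ A * Real.exp (B * r ^ 2) * Real.exp (ε * (d / r) ^ 2) :=
        doubling_factor_le hC.le hN hε hr hd
    _ ≤ max A B * Real.exp (max A B * r ^ 2) * Real.exp (ε * (d / r) ^ 2) := by
        gcongr
        · exact le_max_left A B
        · exact le_max_right A B

end DoublingFactor

section BallComparison

variable {X : Type*} [PseudoMetricSpace X] [MeasurableSpace X] {m : Measure X}

lemma measure_ball_le_measure_ball_add_dist (x₁ x₂ : X) (r : ℝ) :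
    m (ball x₂ r) ≤ m (ball x₁ (r + dist x₁ x₂)) :=
  measure_mono (ball_subset_ball' (by rw [dist_comm]))

theorem statement_9_general (C N : ℝ) (hC : 0 < C) (hN : 0 ≤ N)
    (hdoubling : ∀ (x : X) (r R : ℝ), 0 < r → r ≤ R →
      m (ball x R) ≤ ENNReal.ofReal (C * Real.exp (C * R) * (R / r) ^ N) * m (ball x r))
    (ε : ℝ) (hε : 0 < ε) :
    ∃ C' : ℝ, 0 < C' ∧ ∀ t : ℝ, 0 < t → ∀ x₁ x₂ : X,
      m (ball x₂ (Real.sqrt t)) ≤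
        ENNReal.ofReal (C' * Real.exp (C' * t) * Real.exp (ε * dist x₁ x₂ ^ 2 / t)) *
          m (ball x₁ (Real.sqrt t)) := by
  obtain ⟨C', hC', hfactor⟩ := exists_doubling_factor_le hC hN hε
  refine ⟨C', hC', fun t ht x₁ x₂ => ?_⟩
  have hr : 0 < Real.sqrt t := Real.sqrt_pos.mpr ht
  have hbound := hfactor (Real.sqrt t) (dist x₁ x₂) hr dist_nonneg
  rw [div_pow, Real.sq_sqrt ht.le, ← mul_div_assoc] at hbound
  calc m (ball x₂ (Real.sqrt t))
      ≤ m (ball x₁ (Real.sqrt t + dist x₁ x₂)) := measure_ball_le_measure_ball_add_dist x₁ x₂ _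
    _ ≤ _ := hdoubling x₁ _ _ hr (le_add_of_nonneg_right dist_nonneg)
    _ ≤ _ := by gcongr

end BallComparison

/-- A local volume doubling estimate
`m(B(x,R)) ≤ C e^{CR} (R/r)^N m(B(x,r))` (for `0 < r ≤ R`) implies the local volume comparison:
for every `ε > 0` there is `C' > 0` with
`m(B(x₂,√t)) ≤ C' e^{C't} e^{ε d(x₁,x₂)²/t} m(B(x₁,√t))` for all `t > 0` and `x₁ x₂ ∈ X`. -/
theorem statement_9
    {X : Type*} [MetricSpace X] [MeasurableSpace X]
    (m : Measure X)
    (hpos : ∀ (x : X) (r : ℝ), 0 < r → 0 < m (ball x r))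
    (hfin : ∀ (x : X) (r : ℝ), 0 < r → m (ball x r) < ⊤)
    (C N : ℝ) (hC : 0 < C) (hN : 0 < N)
    (hdoubling : ∀ (x : X) (r R : ℝ), 0 < r → r ≤ R →
      m (ball x R) ≤ ENNReal.ofReal (C * Real.exp (C * R) * (R / r) ^ N) * m (ball x r)) :
    ∀ ε : ℝ, 0 < ε → ∃ C' : ℝ, 0 < C' ∧ ∀ t : ℝ, 0 < t → ∀ x₁ x₂ : X,
      m (ball x₂ (Real.sqrt t)) ≤
        ENNReal.ofReal (C' * Real.exp (C' * t) * Real.exp (ε * dist x₁ x₂ ^ 2 / t)) *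
          m (ball x₁ (Real.sqrt t)) :=
  statement_9_general C N hC hN.le hdoubling
end

section
/- Let (X,d) be a proper metric space (closed bounded sets are compact), m a Borel measure on X that is finite on compact sets, K ⊆ X a compact set, and t, C₃, C₄ > 0. Let p : X × X → [0,∞) be Borel measurable and suppose that p(x,y) ≤ C₃ · m(B(y,√t))^{-1} · e^{-d(x,y)²/(C₄ t)} for all x, y ∈ X, and that inf_{y ∈ K} m(B(y,√t)) > 0. Then the function f(x) := ∫_K p(x,y) dm(y) vanishes at infinity: for every ε > 0 there exists a compact set L ⊆ X such that f(x) ≤ ε for all x ∈ X ∖ L. -/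
open MeasureTheory Filter Set Metric Topology

/-!
Only the decay of the Gaussian factor matters, not its rate: as `x` leaves every bounded set,
`dist x y → ∞` uniformly in `y ∈ K`, while the volume factor is at most `1 / c` on `K` for some
`c > 0`. Hence `p x → 0` uniformly on `K`, and since `K` has finite measure the integrals over `K`
tend to `0`. In a proper space, leaving every bounded set is the same as leaving every compact set.
-/

open Bornology
open scoped ENNReal

section UniformConvergence

variable {ι α E : Type*} [MeasurableSpace α] [NormedAddCommGroup E] {μ : Measure α} {s : Set α}
  {l : Filter ι} {F : ι → α → E} {f : α → E}

theorem eventually_integrableOn_of_tendstoUniformlyOn (hs : MeasurableSet s) (hμs : μ s ≠ ∞)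
    (hF : ∀ i, AEStronglyMeasurable (F i) (μ.restrict s)) (hf : IntegrableOn f s μ)
    (h : TendstoUniformlyOn F f l s) : ∀ᶠ i in l, IntegrableOn (F i) s μ := by
  filter_upwards [Metric.tendstoUniformlyOn_iff.1 h 1 one_pos] with i hi
  have hbound : ∀ a ∈ s, ‖(F i - f) a‖ ≤ 1 := fun a ha ↦ by
    simpa only [Pi.sub_apply, dist_eq_norm'] using (hi a ha).le
  have hdiff : IntegrableOn (F i - f) s μ :=
    .of_bound hμs.lt_top ((hF i).sub hf.aestronglyMeasurable) 1
      (ae_restrict_of_forall_mem hs hbound)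
  simpa only [sub_add_cancel] using hdiff.add hf

theorem tendsto_setIntegral_of_tendstoUniformlyOn [NormedSpace ℝ E] (hμs : μ s ≠ ∞)
    (hF : ∀ᶠ i in l, IntegrableOn (F i) s μ) (hf : IntegrableOn f s μ)
    (h : TendstoUniformlyOn F f l s) :
    Tendsto (fun i ↦ ∫ a in s, F i a ∂μ) l (𝓝 (∫ a in s, f a ∂μ)) := by
  refine Metric.tendsto_nhds.2 fun ε hε ↦ ?_
  obtain ⟨δ, hδ, hδε⟩ := exists_pos_mul_lt hε (μ.real s)
  filter_upwards [hF, Metric.tendstoUniformlyOn_iff.1 h δ hδ] with i hFi hi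
  have hbound : ∀ a ∈ s, ‖F i a - f a‖ ≤ δ := fun a ha ↦ by
    simpa only [dist_eq_norm'] using (hi a ha).le
  calc dist (∫ a in s, F i a ∂μ) (∫ a in s, f a ∂μ)
      = ‖∫ a in s, (F i a - f a) ∂μ‖ := by rw [dist_eq_norm, integral_sub hFi hf]
    _ ≤ δ * μ.real s := norm_setIntegral_le_of_norm_le_const hμs.lt_top hbound
    _ < ε := by rwa [mul_comm]

end UniformConvergence

section Distance

variable {X : Type*} [PseudoMetricSpace X] {K : Set X}

theorem tendsto_dist_cobounded_prod_principal_atTop (hK : IsBounded K) :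
    Tendsto (fun q : X × X ↦ dist q.1 q.2) (cobounded X ×ˢ 𝓟 K) atTop := by
  refine tendsto_atTop.2 fun R ↦ eventually_prod_principal_iff.2 ?_
  filter_upwards [hK.cthickening (δ := R)] with x hx y hy
  by_contra! hxy
  exact hx (mem_cthickening_of_dist_le x y R K hy hxy.le)

theorem tendstoUniformlyOn_zero_of_norm_le_comp_dist {E : Type*} [SeminormedAddCommGroup E]
    (hK : IsBounded K) {φ : ℝ → ℝ} (hφ : Tendsto φ atTop (𝓝 0)) {p : X → X → E}
    (hp : ∀ x, ∀ y ∈ K, ‖p x y‖ ≤ φ (dist x y)) : TendstoUniformlyOn p 0 (cobounded X) K := by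
  have hbound : ∀ᶠ q in cobounded X ×ˢ 𝓟 K, ‖p q.1 q.2‖ ≤ φ (dist q.1 q.2) :=
    eventually_prod_principal_iff.2 (.of_forall hp)
  have hlim : Tendsto (fun q : X × X ↦ p q.1 q.2) (cobounded X ×ˢ 𝓟 K) (𝓝 0) :=
    squeeze_zero_norm' hbound (hφ.comp (tendsto_dist_cobounded_prod_principal_atTop hK))
  exact tendsto_prod_principal_iff.1 hlim

end Distance

theorem exists_pos_forall_le_toReal_of_biInf_pos {α : Type*} {s : Set α} {f : α → ℝ≥0∞}
    (hfin : ∀ a ∈ s, f a ≠ ∞) (hinf : 0 < ⨅ a ∈ s, f a) :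
    ∃ c : ℝ, 0 < c ∧ ∀ a ∈ s, c ≤ (f a).toReal := by
  obtain ⟨c, hc, hcf⟩ := ENNReal.lt_iff_exists_nnreal_btwn.1 hinf
  exact ⟨c, ENNReal.coe_pos.1 hc, fun a ha ↦
    ENNReal.toReal_mono (hfin a ha) (hcf.le.trans (iInf₂_le a ha))⟩

theorem tendsto_exp_neg_sq_div_atTop {b : ℝ} (hb : 0 < b) :
    Tendsto (fun R : ℝ ↦ Real.exp (-(R ^ 2 / b))) atTop (𝓝 0) :=
  Real.tendsto_exp_neg_atTop_nhds_zero.comp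
    ((tendsto_pow_atTop two_ne_zero).atTop_div_const hb)

theorem statement_10_general {X : Type*} [PseudoMetricSpace X] [MeasurableSpace X]
    {m : Measure X} {K : Set X} (hK : IsBounded K) (hKmeas : MeasurableSet K) (hmK : m K ≠ ∞)
    {r : ℝ} (hfin : ∀ y ∈ K, m (ball y r) ≠ ∞) (hinf : 0 < ⨅ y ∈ K, m (ball y r))
    {φ : ℝ → ℝ} (hφ : Tendsto φ atTop (𝓝 0))
    {p : X → X → ℝ} (hpmeas : ∀ x, AEStronglyMeasurable (p x) (m.restrict K))
    (hbound : ∀ x, ∀ y ∈ K, |p x y| ≤ φ (dist x y) / m.real (ball y r)) :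
    (∀ᶠ x in cobounded X, IntegrableOn (p x) K m) ∧
      Tendsto (fun x ↦ ∫ y in K, p x y ∂m) (cobounded X) (𝓝 0) := by
  obtain ⟨c, hc, hball⟩ := exists_pos_forall_le_toReal_of_biInf_pos hfin hinf
  have hdecay : ∀ x, ∀ y ∈ K, ‖p x y‖ ≤ φ (dist x y) / c := fun x y hy ↦ by
    have hmul : |p x y| * m.real (ball y r) ≤ φ (dist x y) :=
      (le_div_iff₀ (hc.trans_le (hball y hy))).1 (hbound x y hy)
    exact (le_div_iff₀ hc).2 ((mul_le_mul_of_nonneg_left (hball y hy) (abs_nonneg _)).trans hmul)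
  have hunif : TendstoUniformlyOn p 0 (cobounded X) K :=
    tendstoUniformlyOn_zero_of_norm_le_comp_dist hK (by simpa using hφ.div_const c) hdecay
  have hint := eventually_integrableOn_of_tendstoUniformlyOn hKmeas hmK hpmeas integrableOn_zero
    hunif
  exact ⟨hint, by
    simpa using tendsto_setIntegral_of_tendstoUniformlyOn hmK hint integrableOn_zero hunif⟩

/-- On a proper metric space with a measure finite on compacts, a Gaussian
upper bound `p(x,y) ≤ C₃ m(B(y,√t))⁻¹ e^{-d(x,y)²/(C₄ t)}` together with
`inf_{y ∈ K} m(B(y,√t)) > 0` implies that `f(x) = ∫_K p(x,y) dm(y)` vanishes at infinity. -/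
theorem statement_10
    {X : Type*} [MetricSpace X] [ProperSpace X] [MeasurableSpace X] [BorelSpace X]
    (m : Measure X) [IsFiniteMeasureOnCompacts m]
    (K : Set X) (hK : IsCompact K)
    (t C₃ C₄ : ℝ) (ht : 0 < t) (hC₃ : 0 < C₃) (hC₄ : 0 < C₄)
    (p : X → X → ℝ) (hpmeas : Measurable (Function.uncurry p))
    (hpnonneg : ∀ x y : X, 0 ≤ p x y)
    (hbound : ∀ x y : X,
      p x y ≤ C₃ * (m (ball y (Real.sqrt t))).toReal⁻¹ *
        Real.exp (-(dist x y ^ 2 / (C₄ * t))))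
    (hinf : 0 < ⨅ y ∈ K, m (ball y (Real.sqrt t))) :
    ∀ ε : ℝ, 0 < ε → ∃ L : Set X, IsCompact L ∧
      ∀ x : X, x ∉ L → (∫ y in K, p x y ∂m) ≤ ε := by
  have hφ : Tendsto (fun R : ℝ ↦ C₃ * Real.exp (-(R ^ 2 / (C₄ * t)))) atTop (𝓝 0) := by
    simpa using (tendsto_exp_neg_sq_div_atTop (mul_pos hC₄ ht)).const_mul C₃
  have hdecay : ∀ x, ∀ y ∈ K, |p x y| ≤
      C₃ * Real.exp (-(dist x y ^ 2 / (C₄ * t))) / m.real (ball y (Real.sqrt t)) := fun x y _ ↦ by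
    rw [abs_of_nonneg (hpnonneg x y), div_eq_mul_inv, mul_right_comm]
    exact hbound x y
  obtain ⟨-, hlim⟩ := statement_10_general hK.isBounded hK.measurableSet hK.measure_ne_top
    (fun _ _ ↦ measure_ball_lt_top.ne) hinf hφ
    (fun _ ↦ hpmeas.of_uncurry_left.aestronglyMeasurable) hdecay
  rw [cobounded_eq_cocompact] at hlim
  exact fun ε hε ↦ hasBasis_cocompact.eventually_iff.1 (hlim.eventually_le_const hε)
end
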